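/- Let R be a commutative noetherian ring, let J be a Gorenstein injective R-module, and let p be a prime ideal of R. Then Tor_i^{R_p}(κ(p), J_p) = 0 for every i < depth(R_p), where κ(p) is the residue field of the local ring R_p; equivalently, depth(R_p) ≤ width_{R_p}(J_p). -/

import Mathlib

/-!
Let `R` be a commutative noetherian ring, `J` a Gorenstein injective `R`-module and `p`
a prime ideal. Then `Tor_i^{R_p}(κ(p), J_p) = 0` for every `i < depth R_p`;
equivalently, `depth R_p ≤ width_{R_p} J_p`.
-/

universe u

open CategoryTheory

/-- A witness that `J` is a Gorenstein injective `R`-module: an exact complex `I` of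
injective `R`-modules (with differentials `d i : I (i+1) →ₗ[R] I i`) such that
`Hom_R(E, I)` is exact for every injective `R`-module `E`, together with an
isomorphism `J ≅ ker (I 0 → I (-1))`. -/
structure GorensteinInjectiveWitness (R : Type u) [CommRing R]
    (J : Type u) [AddCommGroup J] [Module R J] : Type (u + 1) where
  I : ℤ → Type u
  [acg : ∀ i, AddCommGroup (I i)]
  [mod : ∀ i, Module R (I i)]
  inj : ∀ i, Module.Injective R (I i)
  d : ∀ i : ℤ, I (i + 1) →ₗ[R] I i
  d_comp_d : ∀ i : ℤ, (d i).comp (d (i + 1)) = 0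
  exact : ∀ i : ℤ, LinearMap.ker (d i) = LinearMap.range (d (i + 1))
  hom_exact : ∀ (E : Type u) [AddCommGroup E] [Module R E], Module.Injective R E →
    ∀ (i : ℤ) (f : E →ₗ[R] I (i + 1)), (d i).comp f = 0 →
      ∃ g : E →ₗ[R] I (i + 1 + 1), (d (i + 1)).comp g = f
  ker_iso : Nonempty (J ≃ₗ[R] LinearMap.ker (d (-1)))

/-- `J` is a Gorenstein injective `R`-module. -/
def IsGorensteinInjective (R : Type u) [CommRing R]
    (J : Type u) [AddCommGroup J] [Module R J] : Prop :=
  Nonempty (GorensteinInjectiveWitness R J)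

/-- The depth of a noetherian local ring `A`: the supremum (in `ℕ∞`) of lengths of
`A`-regular sequences contained in the maximal ideal. -/
noncomputable def ringDepth (A : Type u) [CommRing A] [IsLocalRing A] : ℕ∞ :=
  sSup {c : ℕ∞ | ∃ rs : List A, c = rs.length ∧
    (∀ r ∈ rs, r ∈ IsLocalRing.maximalIdeal A) ∧ RingTheory.Sequence.IsRegular A rs}

/-- The width of a module `N` over a local ring `A`:
`inf { i | Tor_i^A(k, N) ≠ 0 } ∈ ℕ∞`, where `k` is the residue field of `A`. -/
noncomputable def modWidth (A : Type u) [CommRing A] [IsLocalRing A]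
    (N : Type u) [AddCommGroup N] [Module A N] : ℕ∞ :=
  sInf {c : ℕ∞ | ∃ i : ℕ, c = i ∧
    ¬ Subsingleton (((Tor (ModuleCat.{u} A) i).obj
      (ModuleCat.of A (IsLocalRing.ResidueField A))).obj (ModuleCat.of A N))}

open CategoryTheory.Abelian Limits TensorProduct Pointwise

namespace GorInjTor

/-- Vanishing of `Ext^i(N, T⋆)` into the character module of `T` forces `Tor_i(T, N) = 0`. -/
theorem tor_subsingleton_of_ext {A : Type u} [CommRing A] (T N : Type u)
    [AddCommGroup T] [Module A T] [AddCommGroup N] [Module A N] (i : ℕ)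
    (h : Subsingleton (Ext (ModuleCat.of A N) (ModuleCat.of A (CharacterModule T)) i)) :
    Subsingleton (((Tor (ModuleCat.{u} A) i).obj (ModuleCat.of A T)).obj (ModuleCat.of A N)) := by
  let P := projectiveResolution (ModuleCat.of A N)
  let F := (MonoidalCategory.tensoringLeft (ModuleCat.{u} A)).obj (ModuleCat.of A T)
  let K := (F.mapHomologicalComplex (ComplexShape.down ℕ)).obj P.complex
  refine @ModuleCat.subsingleton_of_isZero _ _ _ ?_
  refine IsZero.of_iso ?_ (P.isoLeftDerivedObj F i)
  change IsZero (K.homology i)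
  rw [← HomologicalComplex.exactAt_iff_isZero_homology]
  -- cocycles are coboundaries
  have key : ∀ f : P.complex.X i ⟶ ModuleCat.of A (CharacterModule T),
      P.complex.d (i + 1) i ≫ f = 0 →
      ∃ g : P.complex.X ((ComplexShape.down ℕ).next i) ⟶ ModuleCat.of A (CharacterModule T),
        P.complex.d i ((ComplexShape.down ℕ).next i) ≫ g = f := by
    intro f hf
    cases i with
    | zero =>
      refine ⟨0, ?_⟩
      have hex := P.exact₀
      let g : ModuleCat.of A N ⟶ ModuleCat.of A (CharacterModule T) := hex.desc f hf
      have hg : g = 0 := Ext.addEquiv₀.symm.injective (Subsingleton.elim _ _)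
      have := hex.g_desc f hf
      have h2 : hex.desc f hf = 0 := hg
      rw [h2, comp_zero] at this
      rw [comp_zero, this]
    | succ j =>
      have e : (ComplexShape.down ℕ).next (j + 1) = j := by simp
      rw [e]
      exact (P.extMk_eq_zero_iff f (j + 2) rfl hf j rfl).1 (Subsingleton.elim _ _)
  rw [K.exactAt_iff' (i + 1) i _ (by simp) rfl, ShortComplex.moduleCat_exact_iff]
  intro z hz
  by_contra hne
  let D : T ⊗[A] P.complex.X (i + 1) →ₗ[A] T ⊗[A] P.complex.X i :=
    (P.complex.d (i + 1) i).hom.lTensor T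
  let D' : T ⊗[A] P.complex.X i →ₗ[A] T ⊗[A] P.complex.X ((ComplexShape.down ℕ).next i) :=
    (P.complex.d i ((ComplexShape.down ℕ).next i)).hom.lTensor T
  change T ⊗[A] P.complex.X i at z
  change D' z = 0 at hz
  have hz' : Submodule.Quotient.mk (p := LinearMap.range D) z ≠ 0 := by
    intro h0
    rw [Submodule.Quotient.mk_eq_zero] at h0
    exact hne h0
  obtain ⟨c, hc⟩ := CharacterModule.exists_character_apply_ne_zero_of_ne_zero hz'
  let c' : CharacterModule (P.complex.X i ⊗[A] T) :=
    CharacterModule.dual ((LinearMap.range D).mkQ ∘ₗ (TensorProduct.comm A _ _).toLinearMap) c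
  have hc' : c' (TensorProduct.comm A _ _ z) ≠ 0 := by
    change c (Submodule.Quotient.mk ((TensorProduct.comm A _ _) (TensorProduct.comm A _ _ z))) ≠ 0
    rw [TensorProduct.comm_comm]
    exact hc
  let f : P.complex.X i →ₗ[A] CharacterModule T := CharacterModule.curry c'
  have hf : P.complex.d (i + 1) i ≫ ModuleCat.ofHom f = 0 := by
    ext x t
    change c (Submodule.Quotient.mk (t ⊗ₜ[A] (P.complex.d (i + 1) i).hom x)) = 0
    have : Submodule.Quotient.mk (p := LinearMap.range D)
        (t ⊗ₜ[A] (P.complex.d (i + 1) i).hom x) = 0 := by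
      rw [Submodule.Quotient.mk_eq_zero]
      exact ⟨t ⊗ₜ x, by simp [D]⟩
    rw [this, map_zero]
  obtain ⟨g, hg⟩ := key (ModuleCat.ofHom f) hf
  have hfg : f = g.hom ∘ₗ (P.complex.d i ((ComplexShape.down ℕ).next i)).hom := by
    rw [← ModuleCat.hom_comp, hg]; rfl
  have hall : ∀ w : T ⊗[A] P.complex.X i,
      c' (TensorProduct.comm A _ _ w) =
        CharacterModule.uncurry g.hom (TensorProduct.comm A _ _ (D' w)) := by
    intro w
    induction w using TensorProduct.induction_on with
    | zero => simp only [map_zero]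
    | add a b ha hb => simp only [map_add, ha, hb]
    | tmul t x =>
      have : f x t = g.hom ((P.complex.d i ((ComplexShape.down ℕ).next i)).hom x) t := by
        rw [hfg]; rfl
      exact this
  apply hc'
  rw [hall, hz, map_zero, map_zero]

/-- Third-term vanishing in the contravariant long exact sequence. -/
theorem ext_third {A : Type u} [CommRing A] {S : ShortComplex (ModuleCat.{u} A)}
    (hS : S.ShortExact) (V : ModuleCat.{u} A) (i : ℕ)
    (h1 : Subsingleton (Ext S.X₁ V i))
    (h2 : ∀ x : Ext S.X₃ V (i + 1), (Ext.mk₀ S.g).comp x (zero_add _) = 0) :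
    Subsingleton (Ext S.X₃ V (i + 1)) := by
  refine subsingleton_of_forall_eq 0 fun x => ?_
  obtain ⟨y, rfl⟩ := Ext.contravariant_sequence_exact₃ hS V x (h2 x) (n₀ := i) (by omega)
  rw [Subsingleton.elim y 0, Ext.comp_zero]

theorem ext_subsingleton_of_iso {A : Type u} [CommRing A] {M N : ModuleCat.{u} A} (e : M ≅ N)
    (V : ModuleCat.{u} A) (i : ℕ) (h : Subsingleton (Ext M V i)) : Subsingleton (Ext N V i) := by
  refine subsingleton_of_forall_eq 0 fun x => ?_
  have : (Ext.mk₀ e.inv).comp ((Ext.mk₀ e.hom).comp x (zero_add i)) (zero_add i) = x := by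
    simp
  rw [← this, Subsingleton.elim ((Ext.mk₀ e.hom).comp x (zero_add i)) 0, Ext.comp_zero]

/-- `Ext^i(Hom(Q,E), V) = 0` for `i` less than the length of a `Q`-regular sequence killing `V`,
when `E` is injective. -/
theorem ext_hom_injective {A : Type u} [CommRing A] (E V : Type u)
    [AddCommGroup E] [Module A E] [AddCommGroup V] [Module A V] (hE : Module.Injective A E)
    (rs : List A) : ∀ (Q : Type u) [AddCommGroup Q] [Module A Q],
    RingTheory.Sequence.IsWeaklyRegular Q rs → (∀ r ∈ rs, ∀ v : V, r • v = 0) →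
    ∀ i : ℕ, i < rs.length →
      Subsingleton (Ext (ModuleCat.of A (Q →ₗ[A] E)) (ModuleCat.of A V) i) := by
  induction rs with
  | nil => intro Q _ _ _ _ i hi; simp at hi
  | cons r rs ih =>
    intro Q _ _ hreg hV i hi
    rw [RingTheory.Sequence.isWeaklyRegular_cons_iff] at hreg
    obtain ⟨hr, hreg⟩ := hreg
    have hrV : ∀ v : V, r • v = 0 := hV r (by simp)
    have hsurj : Function.Surjective (LinearMap.lsmul A (Q →ₗ[A] E) r) := by
      intro φ
      obtain ⟨ψ, hψ⟩ := hE.out (LinearMap.lsmul A Q r) hr φ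
      refine ⟨ψ, ?_⟩
      ext q
      simpa using hψ q
    cases i with
    | zero =>
      refine (Ext.addEquiv₀ (X := ModuleCat.of A (Q →ₗ[A] E))
        (Y := ModuleCat.of A V)).toEquiv.subsingleton_congr.2 ?_
      refine subsingleton_of_forall_eq 0 fun f => ?_
      ext φ
      obtain ⟨ψ, rfl⟩ := hsurj φ
      change f.hom (r • ψ) = 0
      rw [map_smul]
      exact hrV _
    | succ i =>
      let α : (QuotSMulTop r Q →ₗ[A] E) →ₗ[A] (Q →ₗ[A] E) :=
        (Submodule.mkQ (r • (⊤ : Submodule A Q))).lcomp A E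
      let β : (Q →ₗ[A] E) →ₗ[A] (Q →ₗ[A] E) := LinearMap.lsmul A (Q →ₗ[A] E) r
      have hαβ : Function.Exact α β := by
        intro φ
        constructor
        · intro h
          refine ⟨Submodule.liftQ _ φ ?_, ?_⟩
          · rintro _ ⟨q, -, rfl⟩
            have := congrArg (fun t : Q →ₗ[A] E => t q) h
            simpa [β] using this
          · ext q; rfl
        · rintro ⟨ψ, rfl⟩
          ext q
          change r • ψ (Submodule.Quotient.mk q) = 0
          rw [← map_smul, ← Submodule.Quotient.mk_smul]
          have : (Submodule.Quotient.mk (r • q) : QuotSMulTop r Q) = 0 := by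
            rw [Submodule.Quotient.mk_eq_zero]
            exact Submodule.smul_mem_pointwise_smul _ _ _ trivial
          rw [this, map_zero]
      have hα : Function.Injective α := by
        intro a b hab
        ext q
        exact congrArg (fun t : Q →ₗ[A] E => t q) hab
      let S : ShortComplex (ModuleCat.{u} A) :=
        ModuleCat.shortComplexOfCompEqZero α β hαβ.linearMap_comp_eq_zero
      have hS : S.ShortExact := ModuleCat.shortComplex_shortExact S hαβ hα hsurj
      refine ext_third hS (ModuleCat.of A V) i ?_ ?_
      · exact ih (QuotSMulTop r Q) hreg (fun s hs => hV s (by simp [hs])) i (by simpa using hi)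
      · intro x
        have hg : S.g = r • 𝟙 (ModuleCat.of A (Q →ₗ[A] E)) := rfl
        have h0 : r • 𝟙 (ModuleCat.of A V) = 0 := by
          ext v; exact hrV v
        change (Ext.mk₀ (r • 𝟙 (ModuleCat.of A (Q →ₗ[A] E)))).comp x (zero_add _) = 0
        rw [Ext.mk₀_smul, Ext.smul_comp, Ext.mk₀_id_comp, Ext.smul_eq_comp_mk₀, h0,
          Ext.mk₀_zero, Ext.comp_zero]

theorem ext_injective {A : Type u} [CommRing A] (E V : Type u)
    [AddCommGroup E] [Module A E] [AddCommGroup V] [Module A V] (hE : Module.Injective A E)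
    (rs : List A) (hrs : RingTheory.Sequence.IsWeaklyRegular A rs)
    (hV : ∀ r ∈ rs, ∀ v : V, r • v = 0) (i : ℕ) (hi : i < rs.length) :
    Subsingleton (Ext (ModuleCat.of A E) (ModuleCat.of A V) i) :=
  ext_subsingleton_of_iso (LinearMap.ringLmapEquivSelf A A E).toModuleIso _ i
    (ext_hom_injective E V hE rs A hrs hV i hi)

theorem ext_ker {R : Type u} [CommRing R] [IsNoetherianRing R] {J : Type u} [AddCommGroup J]
    [Module R J] (W : GorensteinInjectiveWitness R J) (p : Ideal R) [p.IsPrime]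
    (V : Type u) [AddCommGroup V] [Module (Localization.AtPrime p) V]
    (rs : List (Localization.AtPrime p))
    (hrs : RingTheory.Sequence.IsWeaklyRegular (Localization.AtPrime p) rs)
    (hV : ∀ r ∈ rs, ∀ v : V, r • v = 0) (i : ℕ) :
    letI := W.acg
    letI := W.mod
    ∀ n : ℤ, i < rs.length →
      Subsingleton (Ext (ModuleCat.of (Localization.AtPrime p)
        (LocalizedModule p.primeCompl (LinearMap.ker (W.d n))))
        (ModuleCat.of (Localization.AtPrime p) V) i) := by
  let := W.acg
  let := W.mod
  have hinj : ∀ n, Module.Injective (Localization.AtPrime p)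
      (LocalizedModule p.primeCompl (W.I n)) := fun n =>
    haveI := W.inj n
    Module.injective_of_isLocalizedModule p.primeCompl
      (LocalizedModule.mkLinearMap p.primeCompl (W.I n))
  have hE := fun n => ext_injective (LocalizedModule p.primeCompl (W.I n)) V (hinj n) rs hrs hV
  let q : ∀ n : ℤ, W.I (n + 1 + 1) →ₗ[R] LinearMap.ker (W.d n) := fun n =>
    (W.d (n + 1)).codRestrict _ fun x =>
      congrArg (fun t : W.I (n + 1 + 1) →ₗ[R] W.I n => t x) (W.d_comp_d n)
  have hq : ∀ n, Function.Surjective (q n) := by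
    rintro n ⟨x, hx⟩
    rw [W.exact] at hx
    obtain ⟨y, rfl⟩ := hx
    exact ⟨y, rfl⟩
  have hex : ∀ n, Function.Exact (LinearMap.ker (W.d (n + 1))).subtype (q n) := by
    intro n x
    rw [Subtype.ext_iff]
    change W.d (n + 1) x = 0 ↔ _
    simp
  let α := fun n => LocalizedModule.map p.primeCompl (LinearMap.ker (W.d (n + 1))).subtype
  let β := fun n => LocalizedModule.map p.primeCompl (q n)
  have hβ : ∀ n, Function.Surjective (β n) := fun n =>
    LocalizedModule.map_surjective _ _ (hq n)
  have hαβ : ∀ n, Function.Exact (α n) (β n) := fun n =>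
    LocalizedModule.map_exact _ _ _ (hex n)
  have hα : ∀ n, Function.Injective (α n) := fun n =>
    LocalizedModule.map_injective _ _ (Submodule.injective_subtype _)
  induction i with
  | zero =>
    intro n hi
    have h0 := hE (n + 1 + 1) 0 hi
    refine Ext.addEquiv₀.toEquiv.subsingleton_congr.2 ?_
    refine subsingleton_of_forall_eq 0 fun f => ?_
    have hfz : ModuleCat.ofHom (β n) ≫ f = 0 :=
      Ext.addEquiv₀.symm.injective (Subsingleton.elim _ _)
    ext x
    obtain ⟨y, rfl⟩ := hβ n x
    exact congrArg (fun t => t.hom y) hfz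
  | succ i ih =>
    intro n hi
    let S : ShortComplex (ModuleCat.{u} (Localization.AtPrime p)) :=
      ModuleCat.shortComplexOfCompEqZero (α n) (β n) (hαβ n).linearMap_comp_eq_zero
    have hS : S.ShortExact := ModuleCat.shortComplex_shortExact S (hαβ n) (hα n) (hβ n)
    refine ext_third hS _ i (ih (n + 1) (by omega)) fun x => ?_
    have := hE (n + 1 + 1) (i + 1) hi
    exact Subsingleton.elim (α := Ext (ModuleCat.of (Localization.AtPrime p)
      (LocalizedModule p.primeCompl (W.I (n + 1 + 1)))) _ (i + 1)) _ _

end GorInjTor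

theorem tor_vanishing_of_isGorensteinInjective_localized
    (R : Type u) [CommRing R] [IsNoetherianRing R]
    (J : Type u) [AddCommGroup J] [Module R J] (hJ : IsGorensteinInjective R J)
    (p : Ideal R) [p.IsPrime] :
    (∀ i : ℕ, (i : ℕ∞) < ringDepth (Localization.AtPrime p) →
        Subsingleton (((Tor (ModuleCat.{u} (Localization.AtPrime p)) i).obj
          (ModuleCat.of (Localization.AtPrime p)
            (IsLocalRing.ResidueField (Localization.AtPrime p)))).obj
          (ModuleCat.of (Localization.AtPrime p) (LocalizedModule p.primeCompl J)))) ∧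
      ringDepth (Localization.AtPrime p) ≤
        modWidth (Localization.AtPrime p) (LocalizedModule p.primeCompl J) := by
  have main : ∀ i : ℕ, (i : ℕ∞) < ringDepth (Localization.AtPrime p) →
        Subsingleton (((Tor (ModuleCat.{u} (Localization.AtPrime p)) i).obj
          (ModuleCat.of (Localization.AtPrime p)
            (IsLocalRing.ResidueField (Localization.AtPrime p)))).obj
          (ModuleCat.of (Localization.AtPrime p) (LocalizedModule p.primeCompl J))) := by
    intro i hi
    obtain ⟨W⟩ := hJ
    let := W.acg
    let := W.mod
    obtain ⟨_, ⟨rs, rfl, hm, hreg⟩, hlt⟩ := lt_sSup_iff.1 hi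
    have hlen : i < rs.length := by exact_mod_cast hlt
    refine GorInjTor.tor_subsingleton_of_ext _ _ i ?_
    obtain ⟨e⟩ := W.ker_iso
    have hV : ∀ r ∈ rs, ∀ v : CharacterModule
        (IsLocalRing.ResidueField (Localization.AtPrime p)), r • v = 0 := by
      intro r hr v
      refine DFunLike.ext _ _ fun t => ?_
      rw [CharacterModule.smul_apply]
      have : r • t = 0 := by
        rw [Algebra.smul_def]
        have h0 : algebraMap _ (IsLocalRing.ResidueField (Localization.AtPrime p)) r = 0 :=
          (IsLocalRing.residue_eq_zero_iff r).2 (hm r hr)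
        rw [h0, zero_mul]
      rw [this, map_zero]
      rfl
    refine GorInjTor.ext_subsingleton_of_iso ?_ _ i
      (GorInjTor.ext_ker W p _ rs hreg.toIsWeaklyRegular hV i (-1) hlen)
    exact (IsLocalizedModule.mapEquiv p.primeCompl
      (LocalizedModule.mkLinearMap p.primeCompl _)
      (LocalizedModule.mkLinearMap p.primeCompl _) (Localization.AtPrime p) e.symm).toModuleIso
  refine ⟨main, ?_⟩
  refine le_sInf ?_
  rintro _ ⟨i, rfl, hi⟩
  by_contra hlt
  exact hi (main i (not_le.1 hlt))
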